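/- Let (Ω, μ) be a probability space, Y₀, Y₁ : Ω → ℝ measurable with |Y₀| ≤ M and |Y₁| ≤ M almost surely for some M > 0, T : Ω → {0,1} measurable, and Z : Ω → {0,1,2} measurable with Z independent of the triple (Y₀, Y₁, T) and κ ≤ μ(Z = z) ≤ 1 − κ for all z ∈ {0,1,2}, for some κ ∈ (0, 1/2). Define D := 1 if Z = 1, D := T if Z = 2, D := 0 if Z = 0, and Y := Y₁·1{D = 1} + Y₀·1{D = 0}. Set β_t := E[(Y₁ − Y₀)·1{T = t}] and c := E[Y₀], and define W : [0,1]² → ℝ by W(x,y) = β₁x + β₀y + c if x > y; W(x,y) = (β₁+β₀)x + c if x = y; W(x,y) = β₁y + β₀x + c if x < y. For a sample of size n, on the product space (Ωⁿ, μ^⊗n) define the estimators β̂₁ := (1/n)·Σ_{i=1}^n [ Y⁽ⁱ⁾·1{Z⁽ⁱ⁾ = 2}/μ(Z = 2) − Y⁽ⁱ⁾·1{Z⁽ⁱ⁾ = 0}/μ(Z = 0) ] and β̂₀ := (1/n)·Σ_{i=1}^n [ Y⁽ⁱ⁾·1{Z⁽ⁱ⁾ = 1}/μ(Z = 1) − Y⁽ⁱ⁾·1{Z⁽ⁱ⁾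 = 2}/μ(Z = 2) ], where (Y⁽ⁱ⁾, Z⁽ⁱ⁾) are the i-th coordinate copies, and let δ̂ := d(β̂₁, β̂₀) where d(b₁, b₀) = (1,0) if b₁ > 0 and b₀ < 0; (1,1) if (b₁ ≤ 0 or b₀ ≥ 0) and b₁ + b₀ > 0; (0,0) otherwise. Then for n ≥ κ^{−2}: E_{μ^⊗n}[ max_{(x,y) ∈ [0,1]²} W(x,y) − W(δ̂) ] ≤ 2·e^{−1/2}·M/(κ·√n). -/

import Mathlib

open MeasureTheory ProbabilityTheory

/-!
Imposing treatment 0, imposing treatment 1 and free choice are the three arms of a selection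
problem. Welfare under stated preferences is maximized at one of the three rules that mimic these
arms, where it equals the mean outcome of the corresponding group, and the plug-in rule mimics the
arm with the largest inverse-probability-weighted empirical mean. The scores of two distinct arms
are never both nonzero, so their difference is bounded by `M / κ`; a suboptimal arm with gap `Δ` is
thus selected with probability at most `exp (-n Δ² κ² / (2 M²))` by Hoeffding's inequality, and
`u exp (-u² / 2) ≤ exp (-1 / 2)` bounds its contribution to the regret uniformly in `Δ`.
-/

open scoped BigOperators

lemma mul_exp_neg_sq_div_two_le (u : ℝ) : u * Real.exp (-u ^ 2 / 2) ≤ Real.exp (-(1 / 2)) := by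
  have hu : u ≤ Real.exp ((u ^ 2 - 1) / 2) := by
    linarith [Real.add_one_le_exp ((u ^ 2 - 1) / 2), sq_nonneg (u - 1)]
  calc u * Real.exp (-u ^ 2 / 2)
      ≤ Real.exp ((u ^ 2 - 1) / 2) * Real.exp (-u ^ 2 / 2) := by gcongr
    _ = Real.exp (-(1 / 2)) := by rw [← Real.exp_add]; ring_nf

section EmpiricalArgmax

variable {Ω σ ι : Type*} [MeasurableSpace Ω] {μ : Measure Ω}

lemma integral_comp_le_sum_mul_measureReal [IsFiniteMeasure μ] [Fintype ι] {g : ι → ℝ}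
    (hg : ∀ z, 0 ≤ g z) {A : ι → Set Ω} (hA : ∀ z, MeasurableSet (A z)) {S : Ω → ι}
    (hS : ∀ ω, ω ∈ A (S ω)) : ∫ ω, g (S ω) ∂μ ≤ ∑ z, g z * μ.real (A z) := by
  have hA_int (z : ι) : Integrable ((A z).indicator fun _ => g z) μ :=
    (integrable_const _).indicator (hA z)
  have hle (ω : Ω) : g (S ω) ≤ ∑ z, (A z).indicator (fun _ => g z) ω := by
    simpa only [Set.indicator_of_mem (hS ω)] using Finset.single_le_sum
      (f := fun z => (A z).indicator (fun _ => g z) ω)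
      (fun _ _ => Set.indicator_nonneg (fun _ _ => hg _) ω) (Finset.mem_univ (S ω))
  calc ∫ ω, g (S ω) ∂μ
      ≤ ∫ ω, ∑ z, (A z).indicator (fun _ => g z) ω ∂μ :=
        integral_mono_of_nonneg (.of_forall fun _ => hg _)
          (integrable_finsetSum _ fun _ _ => hA_int _) (.of_forall hle)
    _ = ∑ z, g z * μ.real (A z) := by
        rw [integral_finsetSum _ fun _ _ => hA_int _]
        simp only [integral_indicator_const _ (hA _), smul_eq_mul, mul_comm]

variable [IsProbabilityMeasure μ] [Fintype σ] {B : ℝ}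

lemma measureReal_pi_sum_nonneg_le {X : Ω → ℝ} (hX : AEMeasurable X μ)
    (hXB : ∀ᵐ ω ∂μ, |X ω| ≤ B) (hmean : ∫ ω, X ω ∂μ ≤ 0) :
    (Measure.pi fun _ : σ => μ).real {ω | 0 ≤ ∑ i, X (ω i)}
      ≤ Real.exp (-(Fintype.card σ * ∫ ω, X ω ∂μ) ^ 2 / (2 * (Fintype.card σ * B ^ 2))) := by
  set X' : Ω → ℝ := fun ω => X ω - ∫ ω, X ω ∂μ
  have hindep : iIndepFun (fun (i : σ) ω => X' (ω i)) (Measure.pi fun _ : σ => μ) :=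
    iIndepFun_pi fun _ => hX.sub_const _
  have hsub : HasSubgaussianMGF X' ((‖B - -B‖₊ / 2) ^ 2) μ :=
    hasSubgaussianMGF_of_mem_Icc hX (hXB.mono fun _ => abs_le.1)
  have hsub_eval (i : σ) : HasSubgaussianMGF (fun ω : σ → Ω => X' (ω i))
      ((‖B - -B‖₊ / 2) ^ 2) (Measure.pi fun _ : σ => μ) := by
    refine .of_map (X := X') (Y := fun ω : σ → Ω => ω i) (measurable_pi_apply i).aemeasurable ?_
    rwa [(measurePreserving_eval (fun _ : σ => μ) i).map_eq]
  have hoeffding := HasSubgaussianMGF.measure_sum_ge_le_of_iIndepFun hindep (s := Finset.univ)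
    (fun i _ => hsub_eval i) (ε := Fintype.card σ * -∫ ω, X ω ∂μ)
    (mul_nonneg (Nat.cast_nonneg _) (neg_nonneg.2 hmean))
  have hB : (|B + B| / 2) ^ 2 = B ^ 2 := by rw [div_pow, sq_abs]; ring
  simpa [X', hB] using hoeffding

lemma neg_integral_mul_measureReal_pi_expect_nonneg_le [Nonempty σ] {X : Ω → ℝ}
    (hX : AEMeasurable X μ) (hXB : ∀ᵐ ω ∂μ, |X ω| ≤ B) (hmean : ∫ ω, X ω ∂μ ≤ 0) :
    -(∫ ω, X ω ∂μ) * (Measure.pi fun _ : σ => μ).real {ω | 0 ≤ 𝔼 i, X (ω i)}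
      ≤ Real.exp (-(1 / 2)) * (B / √(Fintype.card σ)) := by
  have hn : (0 : ℝ) < Fintype.card σ := by exact_mod_cast Fintype.card_pos
  have hmeanB : |∫ ω, X ω ∂μ| ≤ B := by
    simpa using norm_integral_le_of_norm_le_const (f := X) hXB
  have hevent : {ω : σ → Ω | 0 ≤ 𝔼 i, X (ω i)} = {ω | 0 ≤ ∑ i, X (ω i)} := by
    simp only [Fintype.expect_eq_sum_div_card, le_div_iff₀ hn, zero_mul]
  rcases ((abs_nonneg _).trans hmeanB).eq_or_lt with rfl | hB
  · simp [abs_nonpos_iff.1 hmeanB]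
  set m := ∫ ω, X ω ∂μ
  set n : ℝ := (Fintype.card σ : ℝ)
  have hexp : -(n * m) ^ 2 / (2 * (n * B ^ 2)) = -(√n * -m / B) ^ 2 / 2 := by
    rw [div_pow, mul_pow √n, Real.sq_sqrt hn.le]; field_simp
  calc -m * (Measure.pi fun _ : σ => μ).real {ω | 0 ≤ 𝔼 i, X (ω i)}
      ≤ -m * Real.exp (-(n * m) ^ 2 / (2 * (n * B ^ 2))) := by
        rw [hevent]
        exact mul_le_mul_of_nonneg_left (measureReal_pi_sum_nonneg_le hX hXB hmean)
          (neg_nonneg.2 hmean)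
    _ = √n * -m / B * Real.exp (-(√n * -m / B) ^ 2 / 2) * (B / √n) := by
        rw [hexp]; field_simp
    _ ≤ Real.exp (-(1 / 2)) * (B / √n) := by gcongr; exact mul_exp_neg_sq_div_two_le _

lemma integral_regret_empirical_argmax_le [Nonempty σ] [Fintype ι] {h : ι → Ω → ℝ}
    (hm : ∀ z, Measurable (h z)) (hint : ∀ z, Integrable (h z) μ)
    (hB : ∀ z z', z ≠ z' → ∀ᵐ ω ∂μ, |h z ω - h z' ω| ≤ B)
    {S : (σ → Ω) → ι} (hS : ∀ ω z, 𝔼 i, h z (ω i) ≤ 𝔼 i, h (S ω) (ω i))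
    {k : ι} (hk : ∀ z, ∫ ω, h z ω ∂μ ≤ ∫ ω, h k ω ∂μ) :
    ∫ ω, ((∫ ω', h k ω' ∂μ) - ∫ ω', h (S ω) ω' ∂μ) ∂(Measure.pi fun _ : σ => μ)
      ≤ (Fintype.card ι - 1) * (Real.exp (-(1 / 2)) * (B / √(Fintype.card σ))) := by
  classical
  set P := Measure.pi fun _ : σ => μ
  set gap : ι → ℝ := fun z => (∫ ω, h k ω ∂μ) - ∫ ω, h z ω ∂μ
  set A : ι → Set (σ → Ω) := fun z => {ω | 0 ≤ 𝔼 i, (h z (ω i) - h k (ω i))}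
  have hgap (z : ι) : 0 ≤ gap z := sub_nonneg.2 (hk z)
  have hA (z : ι) : MeasurableSet (A z) := by
    simp only [A, Fintype.expect_eq_sum_div_card]
    exact measurableSet_le measurable_const (by fun_prop)
  have hS_mem (ω : σ → Ω) : ω ∈ A (S ω) := by
    simpa [A, Finset.expect_sub_distrib] using hS ω k
  have hgap_integral (z : ι) : gap z = -∫ ω, (h z ω - h k ω) ∂μ := by
    rw [integral_sub (hint z) (hint k), neg_sub]
  calc ∫ ω, gap (S ω) ∂P
      ≤ ∑ z, gap z * P.real (A z) := integral_comp_le_sum_mul_measureReal hgap hA hS_mem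
    _ = ∑ z ∈ Finset.univ.erase k, gap z * P.real (A z) :=
        (Finset.sum_erase _ (by simp [gap])).symm
    _ ≤ ∑ _z ∈ Finset.univ.erase k, Real.exp (-(1 / 2)) * (B / √(Fintype.card σ)) := by
        refine Finset.sum_le_sum fun z hz => ?_
        rw [hgap_integral]
        exact neg_integral_mul_measureReal_pi_expect_nonneg_le
          ((hm z).sub (hm k)).aemeasurable (hB z k (Finset.ne_of_mem_erase hz))
          (neg_nonneg.1 (hgap_integral z ▸ hgap z))
    _ = _ := by
        rw [Finset.sum_const, nsmul_eq_mul, Finset.cast_card_erase_of_mem (Finset.mem_univ k),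
          Finset.card_univ]

end EmpiricalArgmax

section InverseProbabilityWeighting

variable {Ω σ ι : Type*} [MeasurableSpace Ω] {μ : Measure Ω} {Z : Ω → ι} {Y U : Ω → ℝ}
  {z z' : ι} {ω : Ω} {M κ : ℝ}

/-- The inverse-probability-weighted outcome `Y · 1{Z = z} / μ(Z = z)`, whose mean is the mean
outcome that would be observed if everyone were assigned to group `z`. It is identically `0` when
`μ(Z = z) = 0`. -/
noncomputable def ipwScore (μ : Measure Ω) (Z : Ω → ι) (Y : Ω → ℝ) (z : ι) (ω : Ω) : ℝ :=
  (Z ⁻¹' {z}).indicator Y ω / μ.real (Z ⁻¹' {z})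

lemma ipwScore_of_ne (h : Z ω ≠ z) : ipwScore μ Z Y z ω = 0 := by
  simp [ipwScore, h]

lemma ipwScore_congr (h : ∀ ω, Z ω = z → Y ω = U ω) : ipwScore μ Z Y z = ipwScore μ Z U z := by
  ext ω
  rw [ipwScore, Set.indicator_congr (s := Z ⁻¹' {z}) h, ipwScore]

lemma ipwScore_eq_mul_ite_div [DecidableEq ι] :
    ipwScore μ Z Y z ω
      = Y ω * (if Z ω = z then 1 else 0) / (μ {ω' | Z ω' = z}).toReal := by
  classical
  rw [mul_ite, mul_one, mul_zero, ipwScore, Set.indicator_apply]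
  congr

lemma abs_ipwScore_le (hY : |Y ω| ≤ M) (hκ : 0 < κ) (hz : κ ≤ μ.real (Z ⁻¹' {z})) :
    |ipwScore μ Z Y z ω| ≤ M / κ := by
  rw [ipwScore, abs_div, abs_of_pos (hκ.trans_le hz)]
  exact div_le_div₀ ((abs_nonneg _).trans hY) ((norm_indicator_le_norm_self Y ω).trans hY) hκ hz

lemma abs_ipwScore_sub_ipwScore_le (hY : |Y ω| ≤ M) (hκ : 0 < κ)
    (hκZ : ∀ z, κ ≤ μ.real (Z ⁻¹' {z})) (hzz' : z ≠ z') :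
    |ipwScore μ Z Y z ω - ipwScore μ Z Y z' ω| ≤ M / κ := by
  by_cases hz : Z ω = z
  · rw [ipwScore_of_ne (hz.trans_ne hzz'), sub_zero]
    exact abs_ipwScore_le hY hκ (hκZ z)
  · rw [ipwScore_of_ne hz, zero_sub, abs_neg]
    exact abs_ipwScore_le hY hκ (hκZ z')

variable [MeasurableSpace ι] [MeasurableSingletonClass ι]

lemma measurable_ipwScore (hU : Measurable U) (hZ : Measurable Z) (z : ι) :
    Measurable (ipwScore μ Z U z) :=
  (hU.indicator (hZ (measurableSet_singleton z))).div_const _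

lemma integral_ipwScore (hU : AEMeasurable U μ) (hZ : Measurable Z) (hUZ : IndepFun U Z μ)
    (hz : μ.real (Z ⁻¹' {z}) ≠ 0) : ∫ ω, ipwScore μ Z U z ω ∂μ = ∫ ω, U ω ∂μ := by
  have hset : ∫ ω in Z ⁻¹' {z}, U ω ∂μ = μ.real (Z ⁻¹' {z}) * ∫ ω, U ω ∂μ :=
    Indep.setIntegral_eq_mul (f := id) hZ.comap_le hUZ.symm hU
      ⟨{z}, measurableSet_singleton z, rfl⟩ aestronglyMeasurable_id
  simp only [ipwScore]
  rw [integral_div, integral_indicator (hZ (measurableSet_singleton z)), hset,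
    mul_div_cancel_left₀ _ hz]

lemma integral_regret_ipw_argmax_le [IsProbabilityMeasure μ] [Fintype σ] [Nonempty σ] [Fintype ι]
    {U : ι → Ω → ℝ} (hU : ∀ z, Measurable (U z)) (hUM : ∀ᵐ ω ∂μ, ∀ z, |U z ω| ≤ M)
    (hZ : Measurable Z) (hUZ : ∀ z, IndepFun (U z) Z μ)
    (hκ : 0 < κ) (hκZ : ∀ z, κ ≤ μ.real (Z ⁻¹' {z})) (hY : ∀ ω, Y ω = U (Z ω) ω)
    {S : (σ → Ω) → ι}
    (hS : ∀ ω z, 𝔼 i, ipwScore μ Z Y z (ω i) ≤ 𝔼 i, ipwScore μ Z Y (S ω) (ω i))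
    {k : ι} (hk : ∀ z, ∫ ω, U z ω ∂μ ≤ ∫ ω, U k ω ∂μ) :
    ∫ ω, ((∫ ω', U k ω' ∂μ) - ∫ ω', U (S ω) ω' ∂μ) ∂(Measure.pi fun _ : σ => μ)
      ≤ (Fintype.card ι - 1) * (Real.exp (-(1 / 2)) * (M / κ / √(Fintype.card σ))) := by
  have hscore (z : ι) : ipwScore μ Z Y z = ipwScore μ Z (U z) z :=
    ipwScore_congr fun ω hω => by rw [hY, hω]
  have hmeas (z : ι) : Measurable (ipwScore μ Z Y z) :=
    hscore z ▸ measurable_ipwScore (hU z) hZ z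
  have hmean (z : ι) : ∫ ω, ipwScore μ Z Y z ω ∂μ = ∫ ω, U z ω ∂μ := by
    rw [hscore]
    exact integral_ipwScore (hU z).aemeasurable hZ (hUZ z) (hκ.trans_le (hκZ z)).ne'
  have hYM : ∀ᵐ ω ∂μ, |Y ω| ≤ M := hUM.mono fun ω hω => hY ω ▸ hω (Z ω)
  have hint (z : ι) : Integrable (ipwScore μ Z Y z) μ :=
    .of_bound (hmeas z).aestronglyMeasurable (M / κ)
      (hYM.mono fun _ hω => abs_ipwScore_le hω hκ (hκZ z))
  simp only [← hmean] at hk ⊢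
  exact integral_regret_empirical_argmax_le hmeas hint
    (fun z z' hzz' => hYM.mono fun _ hω => abs_ipwScore_sub_ipwScore_le hω hκ hκZ hzz') hS hk

end InverseProbabilityWeighting

section GroupOutcome

variable {Ω : Type*} {Y0 Y1 : Ω → ℝ} {T : Ω → Fin 2} {M : ℝ}

/-- The outcome an individual would have in group `z` of a doubly randomized preference trial:
`Y₀` in group `0`, `Y₁` in group `1`, and the outcome `Y_T` of the preferred treatment in
group `2`. -/
def groupOutcome (Y0 Y1 : Ω → ℝ) (T : Ω → Fin 2) (z : Fin 3) (ω : Ω) : ℝ :=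
  ![Y0 ω, Y1 ω, if T ω = 1 then Y1 ω else Y0 ω] z

lemma abs_groupOutcome_le {ω : Ω} (h0 : |Y0 ω| ≤ M) (h1 : |Y1 ω| ≤ M) (z : Fin 3) :
    |groupOutcome Y0 Y1 T z ω| ≤ M := by
  fin_cases z
  · exact h0
  · exact h1
  · change |if T ω = 1 then Y1 ω else Y0 ω| ≤ M
    split_ifs <;> assumption

lemma observedOutcome_eq_groupOutcome {Z : Ω → Fin 3} {D : Ω → Fin 2} {Y : Ω → ℝ}
    (hD : ∀ ω, D ω = if Z ω = 1 then 1 else if Z ω = 2 then T ω else 0)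
    (hY : ∀ ω, Y ω = Y1 ω * (if D ω = 1 then 1 else 0) + Y0 ω * (if D ω = 0 then 1 else 0))
    (ω : Ω) : Y ω = groupOutcome Y0 Y1 T (Z ω) ω := by
  rw [hY, hD]
  generalize Z ω = z
  generalize hT : T ω = t
  fin_cases z <;> fin_cases t <;> simp [groupOutcome, hT]

variable [MeasurableSpace Ω] {μ : Measure Ω}

lemma measurable_groupOutcome (hY0 : Measurable Y0) (hY1 : Measurable Y1) (hT : Measurable T)
    (z : Fin 3) : Measurable (groupOutcome Y0 Y1 T z) := by
  fin_cases z
  · exact hY0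
  · exact hY1
  · exact Measurable.ite (hT (measurableSet_singleton 1)) hY1 hY0

lemma indepFun_groupOutcome {ι : Type*} [MeasurableSpace ι] {Z : Ω → ι}
    (h : IndepFun (fun ω => (Y0 ω, Y1 ω, T ω)) Z μ) (z : Fin 3) :
    IndepFun (groupOutcome Y0 Y1 T z) Z μ :=
  h.comp (φ := groupOutcome (fun v : ℝ × ℝ × Fin 2 => v.1) (fun v => v.2.1) (fun v => v.2.2) z)
    (measurable_groupOutcome measurable_fst measurable_snd.fst measurable_snd.snd z) measurable_id

lemma integral_effect_mul_ite_eq_one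
    (hG : ∀ z, Integrable (groupOutcome Y0 Y1 T z) μ) :
    ∫ ω, (Y1 ω - Y0 ω) * (if T ω = 1 then 1 else 0) ∂μ
      = (∫ ω, groupOutcome Y0 Y1 T 2 ω ∂μ) - ∫ ω, groupOutcome Y0 Y1 T 0 ω ∂μ := by
  rw [← integral_sub (hG 2) (hG 0)]
  congr with ω
  by_cases hT : T ω = 1 <;> simp [groupOutcome, hT]

lemma integral_effect_mul_ite_eq_zero
    (hG : ∀ z, Integrable (groupOutcome Y0 Y1 T z) μ) :
    ∫ ω, (Y1 ω - Y0 ω) * (if T ω = 0 then 1 else 0) ∂μ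
      = (∫ ω, groupOutcome Y0 Y1 T 1 ω ∂μ) - ∫ ω, groupOutcome Y0 Y1 T 2 ω ∂μ := by
  rw [← integral_sub (hG 1) (hG 2)]
  congr with ω
  generalize hT : T ω = t
  fin_cases t <;> simp [groupOutcome, hT]

end GroupOutcome

section TreatmentRule

/-- Welfare under stated preference observation of the rule treating with probability `x` those who
state type `1` and with probability `y` those who state type `0`, expressed through the mean
outcomes `v z` of the groups `z` of the trial: `β₁ = v 2 - v 0`, `β₀ = v 1 - v 2` and `c = v 0`. -/
noncomputable def statedPreferenceWelfare (v : Fin 3 → ℝ) (x y : ℝ) : ℝ :=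
  if x > y then (v 2 - v 0) * x + (v 1 - v 2) * y + v 0
  else if x = y then (v 2 - v 0 + (v 1 - v 2)) * x + v 0
  else (v 2 - v 0) * y + (v 1 - v 2) * x + v 0

/-- The rule `(x, y)` that gives everyone the treatment they would receive in group `z`. -/
def mimickingRule : Fin 3 → ℝ × ℝ := ![(0, 0), (1, 1), (1, 0)]

/-- The optimal rule when `β₁ = b₁` and `β₀ = b₀`. -/
noncomputable def optimalRule (b₁ b₀ : ℝ) : ℝ × ℝ :=
  if b₁ > 0 ∧ b₀ < 0 then (1, 0)
  else if (b₁ ≤ 0 ∨ b₀ ≥ 0) ∧ b₁ + b₀ > 0 then (1, 1)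
  else (0, 0)

variable (v : Fin 3 → ℝ)

lemma statedPreferenceWelfare_mimickingRule (z : Fin 3) :
    statedPreferenceWelfare v (mimickingRule z).1 (mimickingRule z).2 = v z := by
  fin_cases z <;> simp [statedPreferenceWelfare, mimickingRule]

variable {v} in
lemma statedPreferenceWelfare_le {k : Fin 3} (hk : ∀ z, v z ≤ v k) {x y : ℝ}
    (hx : x ∈ Set.Icc (0 : ℝ) 1) (hy : y ∈ Set.Icc (0 : ℝ) 1) :
    statedPreferenceWelfare v x y ≤ v k := by
  -- The left side is the convex combination `(1 - s) v₀ + t v₁ + (s - t) v₂`.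
  have convex_comb_le {s t : ℝ} (hs : s ≤ 1) (ht : 0 ≤ t) (hts : t ≤ s) :
      (v 2 - v 0) * s + (v 1 - v 2) * t + v 0 ≤ v k := by
    linarith [mul_le_mul_of_nonneg_left (hk 0) (sub_nonneg.2 hs),
      mul_le_mul_of_nonneg_left (hk 1) ht,
      mul_le_mul_of_nonneg_left (hk 2) (sub_nonneg.2 hts)]
  rw [statedPreferenceWelfare]
  split_ifs with hyx hxy
  · exact convex_comb_le hx.2 hy.1 hyx.le
  · rw [add_mul]
    exact convex_comb_le hx.2 hx.1 le_rfl
  · exact convex_comb_le hy.2 hx.1 (not_lt.1 hyx)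

variable {v} in
lemma isGreatest_statedPreferenceWelfare {k : Fin 3} (hk : ∀ z, v z ≤ v k) :
    IsGreatest {w | ∃ x ∈ Set.Icc (0 : ℝ) 1, ∃ y ∈ Set.Icc (0 : ℝ) 1,
      statedPreferenceWelfare v x y = w} (v k) := by
  refine ⟨⟨_, ?_, _, ?_, statedPreferenceWelfare_mimickingRule v k⟩, ?_⟩
  · fin_cases k <;> simp [mimickingRule]
  · fin_cases k <;> simp [mimickingRule]
  · rintro _ ⟨x, hx, y, hy, rfl⟩
    exact statedPreferenceWelfare_le hk hx hy

lemma exists_optimalRule_eq_mimickingRule :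
    ∃ s, (∀ z, v z ≤ v s) ∧ optimalRule (v 2 - v 0) (v 1 - v 2) = mimickingRule s := by
  rw [optimalRule]
  split_ifs with h2 h1
  · refine ⟨2, fun z => ?_, rfl⟩
    fin_cases z <;> dsimp <;> linarith
  · refine ⟨1, fun z => ?_, rfl⟩
    rcases h1 with ⟨h | h, _⟩ <;> fin_cases z <;> dsimp <;> linarith
  · refine ⟨0, fun z => ?_, rfl⟩
    rw [not_and_or, not_lt, not_lt] at h2
    have h01 : v 1 ≤ v 0 := by
      by_contra! hlt
      exact h1 ⟨h2, by linarith⟩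
    rcases h2 with h | h <;> fin_cases z <;> dsimp <;> linarith

end TreatmentRule

theorem stmt_19_general {Ω : Type*} [MeasurableSpace Ω] (μ : Measure Ω) [IsProbabilityMeasure μ]
    (Y0 Y1 : Ω → ℝ) (hY0m : Measurable Y0) (hY1m : Measurable Y1)
    (M : ℝ)
    (hY0b : ∀ᵐ ω ∂μ, |Y0 ω| ≤ M) (hY1b : ∀ᵐ ω ∂μ, |Y1 ω| ≤ M)
    (T : Ω → Fin 2) (hT : Measurable T)
    (Z : Ω → Fin 3) (hZ : Measurable Z)
    (hindep : IndepFun (fun ω => (Y0 ω, Y1 ω, T ω)) Z μ)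
    (κ : ℝ) (hκ : 0 < κ)
    (hκZ : ∀ z, κ ≤ (μ {ω | Z ω = z}).toReal)
    (D : Ω → Fin 2)
    (hD : ∀ ω, D ω = if Z ω = 1 then 1 else if Z ω = 2 then T ω else 0)
    (Y : Ω → ℝ)
    (hY : ∀ ω, Y ω = Y1 ω * (if D ω = 1 then 1 else 0) + Y0 ω * (if D ω = 0 then 1 else 0))
    (β : Fin 2 → ℝ)
    (hβ : ∀ t, β t = ∫ ω, (Y1 ω - Y0 ω) * (if T ω = t then 1 else 0) ∂μ)
    (c : ℝ) (hc : c = ∫ ω, Y0 ω ∂μ)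
    (W : ℝ → ℝ → ℝ)
    (hW : ∀ x y, W x y =
      if x > y then β 1 * x + β 0 * y + c
      else if x = y then (β 1 + β 0) * x + c
      else β 1 * y + β 0 * x + c)
    (n : ℕ) (hn : 0 < n)
    (βhat : Fin 2 → (Fin n → Ω) → ℝ)
    (hβhat1 : ∀ ω, βhat 1 ω = (1 / (n : ℝ)) * ∑ i : Fin n,
      (Y (ω i) * (if Z (ω i) = 2 then 1 else 0) / (μ {ω' | Z ω' = 2}).toReal
        - Y (ω i) * (if Z (ω i) = 0 then 1 else 0) / (μ {ω' | Z ω' = 0}).toReal))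
    (hβhat0 : ∀ ω, βhat 0 ω = (1 / (n : ℝ)) * ∑ i : Fin n,
      (Y (ω i) * (if Z (ω i) = 1 then 1 else 0) / (μ {ω' | Z ω' = 1}).toReal
        - Y (ω i) * (if Z (ω i) = 2 then 1 else 0) / (μ {ω' | Z ω' = 2}).toReal))
    (d : ℝ → ℝ → ℝ × ℝ)
    (hd : ∀ b₁ b₀, d b₁ b₀ =
      if b₁ > 0 ∧ b₀ < 0 then ((1 : ℝ), (0 : ℝ))
      else if (b₁ ≤ 0 ∨ b₀ ≥ 0) ∧ b₁ + b₀ > 0 then (1, 1)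
      else (0, 0)) :
    ∫ ω, (sSup {w : ℝ | ∃ x ∈ Set.Icc (0 : ℝ) 1, ∃ y ∈ Set.Icc (0 : ℝ) 1, W x y = w}
        - W (d (βhat 1 ω) (βhat 0 ω)).1 (d (βhat 1 ω) (βhat 0 ω)).2)
        ∂(Measure.pi fun _ : Fin n => μ)
      ≤ 2 * Real.exp (-(1 / 2)) * M / (κ * Real.sqrt n) := by
  have : Nonempty (Fin n) := ⟨⟨0, hn⟩⟩
  set G := groupOutcome Y0 Y1 T
  set m : Fin 3 → ℝ := fun z => ∫ ω, G z ω ∂μ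
  have hGm : ∀ z, Measurable (G z) := measurable_groupOutcome hY0m hY1m hT
  have hGM : ∀ᵐ ω ∂μ, ∀ z, |G z ω| ≤ M := by
    filter_upwards [hY0b, hY1b] with ω h0 h1 using abs_groupOutcome_le h0 h1
  have hG (z : Fin 3) : Integrable (G z) μ :=
    .of_bound (hGm z).aestronglyMeasurable M (hGM.mono fun _ h => h z)
  obtain rfl : W = statedPreferenceWelfare m := by
    ext x y
    rw [hW, hβ 1, hβ 0, hc, integral_effect_mul_ite_eq_one hG, integral_effect_mul_ite_eq_zero hG]
    rfl
  obtain rfl : d = optimalRule := by ext1 b₁; ext1 b₀; exact hd b₁ b₀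
  have hβhat (ω : Fin n → Ω) :
      βhat 1 ω = 𝔼 i, ipwScore μ Z Y 2 (ω i) - 𝔼 i, ipwScore μ Z Y 0 (ω i) ∧
      βhat 0 ω = 𝔼 i, ipwScore μ Z Y 1 (ω i) - 𝔼 i, ipwScore μ Z Y 2 (ω i) := by
    simp only [hβhat1, hβhat0, ← ipwScore_eq_mul_ite_div, one_div_mul_eq_div,
      Fintype.expect_eq_sum_div_card, Fintype.card_fin, Finset.sum_sub_distrib, sub_div, and_self]
  obtain ⟨k, hk⟩ := Finite.exists_max m
  choose S hS hrule using fun ω : Fin n → Ω =>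
    exists_optimalRule_eq_mimickingRule fun z => 𝔼 i, ipwScore μ Z Y z (ω i)
  simp only [(isGreatest_statedPreferenceWelfare hk).csSup_eq, (hβhat _).1, (hβhat _).2, hrule,
    statedPreferenceWelfare_mimickingRule]
  refine (integral_regret_ipw_argmax_le hGm hGM hZ (indepFun_groupOutcome hindep) hκ hκZ
    (observedOutcome_eq_groupOutcome hD hY) hS hk).trans_eq ?_
  rw [Fintype.card_fin, Fintype.card_fin, div_div]
  push_cast
  ring

/-- Proposition 3: Finite-sample maximum-regret bound for the
statistical treatment rule based on data from a doubly randomized preference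
trial: for `n ≥ κ⁻²`, `E[max_{[0,1]²} W - W(δ̂)] ≤ 2 e^{-1/2} M / (κ √n)`. -/
theorem stmt_19 {Ω : Type*} [MeasurableSpace Ω] (μ : Measure Ω) [IsProbabilityMeasure μ]
    (Y0 Y1 : Ω → ℝ) (hY0m : Measurable Y0) (hY1m : Measurable Y1)
    (M : ℝ) (hM : 0 < M)
    (hY0b : ∀ᵐ ω ∂μ, |Y0 ω| ≤ M) (hY1b : ∀ᵐ ω ∂μ, |Y1 ω| ≤ M)
    (T : Ω → Fin 2) (hT : Measurable T)
    (Z : Ω → Fin 3) (hZ : Measurable Z)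
    (hindep : IndepFun (fun ω => (Y0 ω, Y1 ω, T ω)) Z μ)
    (κ : ℝ) (hκ : κ ∈ Set.Ioo (0:ℝ) (1/2))
    (hκZ : ∀ z, κ ≤ (μ {ω | Z ω = z}).toReal ∧ (μ {ω | Z ω = z}).toReal ≤ 1 - κ)
    (D : Ω → Fin 2)
    (hD : ∀ ω, D ω = if Z ω = 1 then 1 else if Z ω = 2 then T ω else 0)
    (Y : Ω → ℝ)
    (hY : ∀ ω, Y ω = Y1 ω * (if D ω = 1 then 1 else 0) + Y0 ω * (if D ω = 0 then 1 else 0))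
    (β : Fin 2 → ℝ)
    (hβ : ∀ t, β t = ∫ ω, (Y1 ω - Y0 ω) * (if T ω = t then 1 else 0) ∂μ)
    (c : ℝ) (hc : c = ∫ ω, Y0 ω ∂μ)
    (W : ℝ → ℝ → ℝ)
    (hW : ∀ x y, W x y =
      if x > y then β 1 * x + β 0 * y + c
      else if x = y then (β 1 + β 0) * x + c
      else β 1 * y + β 0 * x + c)
    (n : ℕ) (hn : κ⁻¹ ^ 2 ≤ (n : ℝ))
    (βhat : Fin 2 → (Fin n → Ω) → ℝ)
    (hβhat1 : ∀ ω, βhat 1 ω = (1 / (n : ℝ)) * ∑ i : Fin n,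
      (Y (ω i) * (if Z (ω i) = 2 then 1 else 0) / (μ {ω' | Z ω' = 2}).toReal
        - Y (ω i) * (if Z (ω i) = 0 then 1 else 0) / (μ {ω' | Z ω' = 0}).toReal))
    (hβhat0 : ∀ ω, βhat 0 ω = (1 / (n : ℝ)) * ∑ i : Fin n,
      (Y (ω i) * (if Z (ω i) = 1 then 1 else 0) / (μ {ω' | Z ω' = 1}).toReal
        - Y (ω i) * (if Z (ω i) = 2 then 1 else 0) / (μ {ω' | Z ω' = 2}).toReal))
    (d : ℝ → ℝ → ℝ × ℝ)
    (hd : ∀ b₁ b₀, d b₁ b₀ =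
      if b₁ > 0 ∧ b₀ < 0 then ((1:ℝ), (0:ℝ))
      else if (b₁ ≤ 0 ∨ b₀ ≥ 0) ∧ b₁ + b₀ > 0 then (1, 1)
      else (0, 0)) :
    ∫ ω, (sSup {w : ℝ | ∃ x ∈ Set.Icc (0:ℝ) 1, ∃ y ∈ Set.Icc (0:ℝ) 1, W x y = w}
        - W (d (βhat 1 ω) (βhat 0 ω)).1 (d (βhat 1 ω) (βhat 0 ω)).2)
        ∂(Measure.pi fun _ : Fin n => μ)
      ≤ 2 * Real.exp (-(1/2)) * M / (κ * Real.sqrt n) := by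
  have hn0 : 0 < n := Nat.cast_pos.1 ((pow_pos (inv_pos.2 hκ.1) 2).trans_le hn)
  exact stmt_19_general μ Y0 Y1 hY0m hY1m M hY0b hY1b T hT Z hZ hindep κ hκ.1 (fun z => (hκZ z).1)
    D hD Y hY β hβ c hc W hW n hn0 βhat hβhat1 hβhat0 d hd
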